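/- Let φ(·,ξ) be the solution of −φ'' − 5(1+R²/3)^{−2} φ = ξφ with φ(0,ξ)=0, ∂_Rφ(0,ξ)=1. Then there is a constant C such that the following pointwise bounds hold: for all ξ > 1, sup_{R>0} |φ(R,ξ)| ≤ C ξ^{−1/2}, |R ∂_R φ(R,ξ)| ≤ C R, |∂_ξ φ(R,ξ)| ≤ C min(R ξ^{−1}, R³), and |∂_ξ² φ(R,ξ)| ≤ C min(R² ξ^{−3/2}, R⁵); for all 0 < ξ < 1, |∂_ξ φ(R,ξ)| ≤ C min(R ξ^{−1/2}, R²) and |∂_ξ² φ(R,ξ)| ≤ C min(R² ξ^{−1}, R⁴). -/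

import Mathlib

noncomputable section

namespace EigenfunctionBounds

lemma energy_lemma {E E' K k : ℝ → ℝ} {a b g : ℝ} (hab : a ≤ b) (hg : 0 ≤ g)
    (hE : ∀ x ∈ Set.Icc a b, HasDerivAt E (E' x) x)
    (hK : ∀ x ∈ Set.Icc a b, HasDerivAt K (k x) x)
    (hk : ∀ x ∈ Set.Icc a b, 0 ≤ k x)
    (hKa : ∀ x ∈ Set.Icc a b, K a ≤ K x)
    (hE0 : ∀ x, 0 ≤ E x)
    (hle : ∀ x ∈ Set.Icc a b, E' x ≤ 2 * k x * E x + 2 * g * √(E x)) :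
    √(E b) ≤ Real.exp (K b - K a) * (√(E a) + g * (b - a)) := by
  apply le_of_forall_pos_le_add
  intro δ hδ
  set X := Real.exp (K b - K a) with hX
  have hXpos : 0 < X := Real.exp_pos _
  set ε := δ / X with hε
  have hεpos : 0 < ε := div_pos hδ hXpos
  have hpos : ∀ x, 0 < E x + ε ^ 2 := fun x => by have := hE0 x; positivity
  let h : ℝ → ℝ := fun x => √(E x + ε ^ 2) * Real.exp (-(K x - K a)) - g * x
  have hd : ∀ x ∈ Set.Icc a b, HasDerivAt h
      (E' x / (2 * √(E x + ε ^ 2)) * Real.exp (-(K x - K a))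
        + √(E x + ε ^ 2) * (Real.exp (-(K x - K a)) * (-(k x))) - g) x := by
    intro x hx
    have h1 : HasDerivAt (fun x => √(E x + ε ^ 2)) (E' x / (2 * √(E x + ε ^ 2))) x :=
      ((hE x hx).add_const _).sqrt (hpos x).ne'
    have h2 : HasDerivAt (fun x => Real.exp (-(K x - K a)))
        (Real.exp (-(K x - K a)) * (-(k x))) x := (((hK x hx).sub_const _).neg).exp
    have h3 := (h1.mul h2).sub ((hasDerivAt_id x).const_mul g)
    exact h3.congr_deriv (by simp)
  have hanti : AntitoneOn h (Set.Icc a b) := by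
    apply antitoneOn_of_deriv_nonpos (convex_Icc a b)
    · exact fun x hx => (hd x hx).continuousAt.continuousWithinAt
    · intro x hx
      exact (hd x (interior_subset hx)).differentiableAt.differentiableWithinAt
    · intro x hx
      have hx := interior_subset hx
      rw [(hd x hx).deriv]
      set y := √(E x + ε ^ 2) with hy
      have hy0 : 0 < y := Real.sqrt_pos.mpr (hpos x)
      have hy2 : y ^ 2 = E x + ε ^ 2 := Real.sq_sqrt (hpos x).le
      have hsy : √(E x) ≤ y := Real.sqrt_le_sqrt (by nlinarith)
      have hEy : E x ≤ y ^ 2 := by nlinarith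
      have h4 : E' x / (2 * y) ≤ k x * y + g := by
        rw [div_le_iff₀ (by positivity)]
        have := hle x hx
        have h5 := mul_le_mul_of_nonneg_left hEy (hk x hx)
        have h6 := mul_le_mul_of_nonneg_left hsy hg
        nlinarith
      have he1 : Real.exp (-(K x - K a)) ≤ 1 := by
        rw [Real.exp_le_one_iff]; linarith [hKa x hx]
      have he0 := Real.exp_pos (-(K x - K a))
      set w := Real.exp (-(K x - K a))
      have h7 := mul_le_mul_of_nonneg_right h4 he0.le
      have h8 := mul_le_mul_of_nonneg_left he1 hg
      nlinarith
  have hfin := hanti (Set.left_mem_Icc.mpr hab) (Set.right_mem_Icc.mpr hab) hab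
  simp only [h, sub_self, neg_zero, Real.exp_zero, mul_one] at hfin
  have h1 : √(E a + ε ^ 2) ≤ √(E a) + ε := by
    rw [Real.sqrt_le_left (by positivity)]
    have := Real.sq_sqrt (hE0 a)
    have := Real.sqrt_nonneg (E a)
    nlinarith
  have h2 : √(E b) ≤ √(E b + ε ^ 2) := Real.sqrt_le_sqrt (by nlinarith)
  have h3 : Real.exp (-(K b - K a)) * X = 1 := by
    rw [hX, ← Real.exp_add]; simp
  have h4 : X * ε = δ := by rw [hε]; field_simp
  have h5 : √(E b + ε ^ 2) * Real.exp (-(K b - K a)) ≤ √(E a) + ε + g * (b - a) := by linarith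
  have h6 := mul_le_mul_of_nonneg_right h5 hXpos.le
  rw [mul_assoc, h3] at h6
  nlinarith

def V (R : ℝ) : ℝ := 5 / (1 + R ^ 2 / 3) ^ 2

lemma V_bd (R : ℝ) : 0 ≤ V R ∧ V R ≤ 5 := by
  unfold V
  refine ⟨by positivity, ?_⟩
  rw [div_le_iff₀ (by positivity)]
  nlinarith [sq_nonneg R, sq_nonneg (R ^ 2)]

def Q (R : ℝ) : ℝ := 1 / R + 2 * R / (R ^ 2 - 3) - 3 * R / (R ^ 2 + 3)

lemma Q_eq {R : ℝ} (hR : 3 ≤ R) : Q R = (15 * R ^ 2 - 9) / (R * (R ^ 4 - 9)) := by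
  unfold Q
  have h1 : R ≠ 0 := by positivity
  have h2 : R ^ 2 - 3 ≠ 0 := by nlinarith
  have h3 : R ^ 2 + 3 ≠ 0 := by nlinarith
  have h4 : R ^ 4 - 9 = (R ^ 2 - 3) * (R ^ 2 + 3) := by ring
  rw [h4]
  field_simp
  ring

lemma Q_bd {R : ℝ} (hR : 3 ≤ R) : 0 ≤ Q R ∧ Q R ≤ 6 / R ^ 2 ∧ Q R ≤ 1 := by
  have h1 : 0 < R := by linarith
  have h9 : 9 ≤ R ^ 2 := by nlinarith
  have h4 : 0 < R ^ 4 - 9 := by nlinarith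
  have h6 : Q R ≤ 6 / R ^ 2 := by
    rw [Q_eq hR, div_le_div_iff₀ (by positivity) (by positivity)]
    nlinarith [mul_nonneg (by linarith : 0 ≤ R - 3) (by positivity : 0 ≤ R ^ 4), mul_le_mul_of_nonneg_left h9 h1.le, mul_le_mul_of_nonneg_left h9 (by positivity : 0 ≤ R ^ 3), sq_nonneg R]
  refine ⟨?_, h6, h6.trans ?_⟩
  · rw [Q_eq hR]
    apply div_nonneg
    · nlinarith
    · positivity
  · rw [div_le_one (by positivity)]; linarith

lemma Q_deriv {R : ℝ} (hR : 3 ≤ R) : HasDerivAt Q (-(Q R) ^ 2 - V R) R := by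
  have h1 : R ≠ 0 := by positivity
  have h2 : R ^ 2 - 3 ≠ 0 := by nlinarith
  have h3 : R ^ 2 + 3 ≠ 0 := by nlinarith
  have hs : HasDerivAt (fun R : ℝ => R ^ 2) (2 * R) R := by simpa using hasDerivAt_pow 2 R
  have d1 : HasDerivAt (fun R : ℝ => 1 / R) ((0 * R - 1 * 1) / R ^ 2) R :=
    (hasDerivAt_const R (1:ℝ)).div (hasDerivAt_id R) h1
  have d2 := ((hasDerivAt_id R).const_mul 2).div (hs.sub_const 3) h2
  have d3 := ((hasDerivAt_id R).const_mul 3).div (hs.add_const 3) h3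
  refine ((d1.add d2).sub d3).congr_deriv ?_
  unfold Q V
  have h5 : 1 + R ^ 2 / 3 ≠ 0 := by positivity
  simp only [id]
  have h6 : 1 + R ^ 2 / 3 = (R ^ 2 + 3) / 3 := by ring
  rw [h6]
  field_simp
  ring

/-- `u'' + (V+ξ) u = -f`. -/
def Sol (ξ : ℝ) (f u u' : ℝ → ℝ) : Prop :=
  (∀ R, HasDerivAt u (u' R) R) ∧ (∀ R, HasDerivAt u' (-(V R + ξ) * u R - f R) R)

lemma abs_le_sqrt_add_left (x : ℝ) {y : ℝ} (hy : 0 ≤ y) : |x| ≤ √(x ^ 2 + y) := by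
  apply Real.abs_le_sqrt; linarith

lemma sqrt_mul_abs_le (x y : ℝ) {ξ : ℝ} (hξ : 0 ≤ ξ) : √ξ * |y| ≤ √(x ^ 2 + ξ * y ^ 2) := by
  apply Real.le_sqrt_of_sq_le
  rw [mul_pow, Real.sq_sqrt hξ, sq_abs]
  nlinarith [sq_nonneg x]

lemma sqrt_le_add (x y : ℝ) {ξ : ℝ} (hξ : 0 ≤ ξ) : √(x ^ 2 + ξ * y ^ 2) ≤ |x| + √ξ * |y| := by
  rw [Real.sqrt_le_left (by positivity)]
  have h1 := Real.sq_sqrt hξ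
  have h2 := sq_abs x
  have h3 := sq_abs y
  have : 0 ≤ |x| * (√ξ * |y|) := by positivity
  calc x ^ 2 + ξ * y ^ 2 = |x| ^ 2 + √ξ ^ 2 * |y| ^ 2 := by rw [h1, h2, h3]
    _ ≤ _ := by nlinarith

lemma core1 {ξ g R : ℝ} {f u u' : ℝ → ℝ} (hξ : 0 ≤ ξ) (hg : 0 ≤ g) (hs : Sol ξ f u u')
    (hu0 : u 0 = 0) (hR : 0 ≤ R) (hR3 : R ≤ 3) (hf : ∀ s ∈ Set.Icc 0 R, |f s| ≤ g) :
    √((u' R) ^ 2 + (ξ + 1) * (u R) ^ 2) ≤ Real.exp 9 * (|u' 0| + g * R) := by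
  have key := energy_lemma (E := fun R => (u' R) ^ 2 + (ξ + 1) * (u R) ^ 2)
    (E' := fun R => 2 * u' R * (-(V R + ξ) * u R - f R) + (ξ + 1) * (2 * u R * u' R))
    (K := fun R => 3 * R) (k := fun _ => 3) hR hg ?_ ?_ ?_ ?_ ?_ ?_
  · simp only [hu0, mul_zero, sub_zero] at key
    have h0 : √(u' 0 ^ 2 + (ξ + 1) * 0 ^ 2) = |u' 0| := by
      rw [← Real.sqrt_sq_eq_abs]; congr 1; ring
    rw [h0] at key
    refine key.trans ?_
    gcongr
    linarith
  · intro x _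
    have := ((hs.2 x).pow 2).add (((hs.1 x).pow 2).const_mul (ξ + 1))
    exact this.congr_deriv (by simp)
  · intro x _
    simpa using (hasDerivAt_id x).const_mul (3:ℝ)
  · intro x _; norm_num
  · intro x hx; simpa using hx.1
  · intro x; positivity
  · intro x hx
    obtain ⟨v0, v5⟩ := V_bd x
    have hfx := hf x hx
    have h1 : |u' x| ≤ √((u' x) ^ 2 + (ξ + 1) * (u x) ^ 2) := abs_le_sqrt_add_left _ (by positivity)
    have h2 : -(u' x * f x) ≤ g * √((u' x) ^ 2 + (ξ + 1) * (u x) ^ 2) := by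
      calc -(u' x * f x) ≤ |u' x * f x| := neg_le_abs _
        _ = |f x| * |u' x| := by rw [abs_mul, mul_comm]
        _ ≤ _ := mul_le_mul hfx h1 (abs_nonneg _) hg
    have h3 : (1 - V x) * (2 * u x * u' x) ≤ 5 * ((u' x) ^ 2 + (u x) ^ 2) := by
      have a1 : |1 - V x| ≤ 5 := by rw [abs_le]; constructor <;> linarith
      have a2 : |2 * u x * u' x| ≤ (u' x) ^ 2 + (u x) ^ 2 := by
        rw [abs_le]; constructor <;> nlinarith [sq_nonneg (u x - u' x), sq_nonneg (u x + u' x)]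
      calc _ ≤ |(1 - V x) * (2 * u x * u' x)| := le_abs_self _
        _ = |1 - V x| * |2 * u x * u' x| := abs_mul _ _
        _ ≤ _ := mul_le_mul a1 a2 (abs_nonneg _) (by norm_num)
    nlinarith [mul_nonneg hξ (sq_nonneg (u x)), sq_nonneg (u x), sq_nonneg (u' x)]

lemma K_deriv {x : ℝ} (hx : x ≠ 0) : HasDerivAt (fun R : ℝ => -6 / R) (6 / x ^ 2) x := by
  have := (hasDerivAt_const x (-6:ℝ)).div (hasDerivAt_id x) hx
  exact this.congr_deriv (by simp)

lemma core2 {ξ g R : ℝ} {f u u' : ℝ → ℝ} (hξ : 0 ≤ ξ) (hg : 0 ≤ g) (hs : Sol ξ f u u')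
    (hR3 : 3 ≤ R) (hf : ∀ s ∈ Set.Icc 3 R, |f s| ≤ g) :
    √((u' R - Q R * u R) ^ 2 + ξ * (u R) ^ 2) ≤
      Real.exp 2 * (√((u' 3 - Q 3 * u 3) ^ 2 + ξ * (u 3) ^ 2) + g * (R - 3)) := by
  have key := energy_lemma (E := fun R => (u' R - Q R * u R) ^ 2 + ξ * (u R) ^ 2)
    (E' := fun R => 2 * (u' R - Q R * u R) * ((-(V R + ξ) * u R - f R) -
        ((-(Q R) ^ 2 - V R) * u R + Q R * u' R)) + ξ * (2 * u R * u' R))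
    (K := fun R => -6 / R) (k := fun R => 6 / R ^ 2) hR3 hg ?_ ?_ ?_ ?_ ?_ ?_
  · refine key.trans ?_
    have : 0 ≤ 6 / R := by positivity
    have h0 : 0 ≤ R - 3 := by linarith
    gcongr
    have : -6 / R = -(6 / R) := by ring
    rw [this]; norm_num; linarith
  · intro x hx
    have := (((hs.2 x).sub ((Q_deriv hx.1).mul (hs.1 x))).pow 2).add (((hs.1 x).pow 2).const_mul ξ)
    exact this.congr_deriv (by simp)
  · intro x hx
    exact K_deriv (by linarith [hx.1])
  · intro x _; positivity
  · intro x hx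
    have h3 : 3 ≤ x := hx.1
    have : 6 / x ≤ 6 / 3 := by gcongr
    have h2 : -6 / x = -(6 / x) := by ring
    simp only [h2]; linarith
  · intro x; positivity
  · intro x hx
    obtain ⟨q0, q6, _⟩ := Q_bd hx.1
    have hfx := hf x hx
    set v := u' x - Q x * u x with hv
    have h1 : |v| ≤ √(v ^ 2 + ξ * (u x) ^ 2) := abs_le_sqrt_add_left _ (by positivity)
    have h2 : -(v * f x) ≤ g * √(v ^ 2 + ξ * (u x) ^ 2) := by
      calc -(v * f x) ≤ |v * f x| := neg_le_abs _
        _ = |f x| * |v| := by rw [abs_mul, mul_comm]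
        _ ≤ _ := mul_le_mul hfx h1 (abs_nonneg _) hg
    have h3 : Q x * (v ^ 2 + ξ * u x ^ 2) ≤ 6 / x ^ 2 * (v ^ 2 + ξ * u x ^ 2) := by gcongr
    have hu' : u' x = v + Q x * u x := by rw [hv]; ring
    rw [hu']
    nlinarith [mul_nonneg q0 (sq_nonneg v)]

lemma core3 {G R : ℝ} {u u' : ℝ → ℝ} (hG : 0 ≤ G) (hs : ∀ R, HasDerivAt u (u' R) R)
    (hR3 : 3 ≤ R) (hf : ∀ s ∈ Set.Icc 3 R, |u' s - Q s * u s| ≤ G) :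
    |u R| ≤ Real.exp 2 * (|u 3| + G * (R - 3)) := by
  have key := energy_lemma (E := fun R => (u R) ^ 2)
    (E' := fun R => 2 * u R * u' R)
    (K := fun R => -6 / R) (k := fun R => 6 / R ^ 2) hR3 hG ?_ ?_ ?_ ?_ ?_ ?_
  · simp only [Real.sqrt_sq_eq_abs] at key
    refine key.trans ?_
    have : 0 ≤ 6 / R := by positivity
    have h0 : 0 ≤ R - 3 := by linarith
    gcongr
    have : -6 / R = -(6 / R) := by ring
    rw [this]; norm_num; linarith
  · intro x hx
    exact ((hs x).pow 2).congr_deriv (by simp)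
  · intro x hx
    exact K_deriv (by linarith [hx.1])
  · intro x _; positivity
  · intro x hx
    have h3 : 3 ≤ x := hx.1
    have : 6 / x ≤ 6 / 3 := by gcongr
    have h2 : -6 / x = -(6 / x) := by ring
    simp only [h2]; linarith
  · intro x; positivity
  · intro x hx
    obtain ⟨q0, q6, _⟩ := Q_bd hx.1
    have hfx := hf x hx
    simp only [Real.sqrt_sq_eq_abs]
    set v := u' x - Q x * u x with hv
    have hu' : u' x = v + Q x * u x := by rw [hv]; ring
    have h2 : u x * v ≤ G * |u x| := by
      calc u x * v ≤ |u x * v| := le_abs_self _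
        _ = |v| * |u x| := by rw [abs_mul, mul_comm]
        _ ≤ _ := by gcongr
    have h3 : Q x * (u x ^ 2) ≤ 6 / x ^ 2 * (u x ^ 2) := by gcongr
    rw [hu']
    nlinarith

lemma mvt_bound {u u' : ℝ → ℝ} {G R : ℝ} (hs : ∀ R, HasDerivAt u (u' R) R) (hu0 : u 0 = 0)
    (hR : 0 ≤ R) (hG : ∀ s ∈ Set.Icc 0 R, |u' s| ≤ G) : |u R| ≤ G * R := by
  have := (convex_Icc 0 R).norm_image_sub_le_of_norm_hasDerivWithin_le
    (fun x _ => (hs x).hasDerivWithinAt) (fun x hx => by simpa using hG x hx)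
    (Set.left_mem_Icc.mpr hR) (Set.right_mem_Icc.mpr hR)
  simpa [hu0, abs_of_nonneg hR] using this


def eC : ℝ := Real.exp 9
def cC : ℝ := Real.exp 2
def BC : ℝ := 5 * cC ^ 2 * eC

lemma eC_one : 1 ≤ eC := Real.one_le_exp (by norm_num)
lemma cC_one : 1 ≤ cC := Real.one_le_exp (by norm_num)

lemma core1' {ξ g R : ℝ} {f u u' : ℝ → ℝ} (hξ : 0 ≤ ξ) (hg : 0 ≤ g) (hs : Sol ξ f u u')
    (hu0 : u 0 = 0) (hR : 0 ≤ R) (hR3 : R ≤ 3) (hf : ∀ s ∈ Set.Icc 0 R, |f s| ≤ g) :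
    |u' R| ≤ eC * (|u' 0| + g * R) ∧ |u R| ≤ eC * (|u' 0| + g * R) ∧
    √ξ * |u R| ≤ eC * (|u' 0| + g * R) := by
  have h := core1 hξ hg hs hu0 hR hR3 hf
  have h1 : |u' R| ≤ _ := (abs_le_sqrt_add_left (u' R) (by positivity)).trans h
  have h2 := (sqrt_mul_abs_le (u' R) (u R) (by positivity : 0 ≤ ξ + 1)).trans h
  refine ⟨h1, ?_, ?_⟩
  · refine le_trans ?_ h2
    have : 1 ≤ √(ξ + 1) := Real.one_le_sqrt.mpr (by linarith)
    nlinarith [abs_nonneg (u R)]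
  · refine le_trans ?_ h2
    gcongr
    linarith

lemma E3_bound {ξ b : ℝ} {u u' : ℝ → ℝ} (hξ : 0 ≤ ξ)
    (h1 : |u' 3| ≤ b) (h2 : |u 3| ≤ b) (h3 : √ξ * |u 3| ≤ b) :
    √((u' 3 - Q 3 * u 3) ^ 2 + ξ * (u 3) ^ 2) ≤ 3 * b := by
  refine (sqrt_le_add _ _ hξ).trans ?_
  obtain ⟨q0, _, q1⟩ := Q_bd (le_refl (3:ℝ))
  have h4 : |Q 3 * u 3| ≤ b := by
    rw [abs_mul, abs_of_nonneg q0]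
    nlinarith [abs_nonneg (u 3)]
  have := abs_sub (u' 3) (Q 3 * u 3)
  linarith

lemma source {ξ g R : ℝ} {f u u' : ℝ → ℝ} (hξ : 0 < ξ) (hg : 0 ≤ g) (hs : Sol ξ f u u')
    (hu0 : u 0 = 0) (hu0' : u' 0 = 0) (hR : 0 ≤ R) (hf : ∀ s ∈ Set.Icc 0 R, |f s| ≤ g) :
    |u R| ≤ BC * g * (R / √ξ) ∧ |u R| ≤ BC * g * R ^ 2 := by
  have he := eC_one
  have hc := cC_one
  have hsq : 0 < √ξ := Real.sqrt_pos.mpr hξ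
  have hB : eC ≤ BC := by
    unfold BC
    nlinarith [mul_le_mul_of_nonneg_right (one_le_pow₀ hc : 1 ≤ cC ^ 2) (by linarith : 0 ≤ eC)]
  have hB2 : 4 * cC * eC ≤ BC := by
    unfold BC
    nlinarith [mul_nonneg (by nlinarith : 0 ≤ cC ^ 2 - cC) (by linarith : 0 ≤ eC), mul_nonneg (by linarith : 0 ≤ cC) (by linarith : 0 ≤ eC)]
  have fmono : ∀ t, t ≤ R → ∀ s ∈ Set.Icc 0 t, |f s| ≤ g :=
    fun t ht s hs => hf s ⟨hs.1, hs.2.trans ht⟩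
  rw [← mul_div_assoc, le_div_iff₀ hsq]
  rcases le_total R 3 with h3 | h3
  · obtain ⟨a1, a2, a3⟩ := core1' hξ.le hg hs hu0 hR h3 hf
    have hm := mvt_bound (G := eC * g * R) hs.1 hu0 hR (by
      intro s hs'
      obtain ⟨b1, _, _⟩ := core1' hξ.le hg hs hu0 hs'.1 (hs'.2.trans h3) (fmono s hs'.2)
      refine b1.trans ?_
      rw [hu0', abs_zero, zero_add, ← mul_assoc]
      have := hs'.2
      gcongr)
    have hgR : 0 ≤ g * R := by positivity
    constructor
    · rw [hu0', abs_zero, zero_add] at a3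
      nlinarith [mul_le_mul_of_nonneg_right hB hgR]
    · have hgR2 : 0 ≤ g * R ^ 2 := by positivity
      nlinarith [mul_le_mul_of_nonneg_right hB hgR2]
  · obtain ⟨a1, a2, a3⟩ := core1' hξ.le hg hs hu0 (by norm_num) le_rfl (fmono 3 h3)
    rw [hu0', abs_zero, zero_add] at a1 a2 a3
    have hE3 := E3_bound hξ.le a1 a2 a3
    have hE : ∀ t ∈ Set.Icc 3 R, √((u' t - Q t * u t) ^ 2 + ξ * (u t) ^ 2) ≤ 4 * cC * eC * g * R := by
      intro t ht
      have := core2 (R := t) hξ.le hg hs ht.1 (fun s hs => hf s ⟨by linarith [hs.1], hs.2.trans ht.2⟩)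
      refine this.trans ?_
      have h5 : √((u' 3 - Q 3 * u 3) ^ 2 + ξ * (u 3) ^ 2) + g * (t - 3) ≤ 4 * eC * g * R := by
        have i1 : eC * g * 3 ≤ eC * g * R := by gcongr
        have i2 : g * (t - 3) ≤ g * R := by gcongr; linarith [ht.2]
        have i3 : 1 * (g * R) ≤ eC * (g * R) := by gcongr
        nlinarith
      calc _ ≤ cC * (4 * eC * g * R) := mul_le_mul_of_nonneg_left h5 (by linarith)
        _ = _ := by ring
    constructor
    · have h1 := (sqrt_mul_abs_le (u' R - Q R * u R) (u R) hξ.le).trans (hE R ⟨h3, le_rfl⟩)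
      have hgR : 0 ≤ g * R := by positivity
      nlinarith [mul_le_mul_of_nonneg_right hB2 hgR]
    · have h1 := core3 (G := 4 * cC * eC * g * R) (by positivity) hs.1 h3
        (fun s hs' => (abs_le_sqrt_add_left _ (by positivity)).trans (hE s hs'))
      refine h1.trans ?_
      have hgR2 : 0 ≤ eC * g := by positivity
      have i1 : eC * (g * 3) ≤ eC * g * R ^ 2 := by
        rw [← mul_assoc]; exact mul_le_mul_of_nonneg_left (by nlinarith) hgR2
      have i2 : 4 * cC * eC * g * R * (R - 3) ≤ 4 * cC * (eC * g * R ^ 2) := by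
        have : 0 ≤ cC * eC * g * R := by positivity
        nlinarith
      have i3 : 1 * (eC * g * R ^ 2) ≤ cC * (eC * g * R ^ 2) := by gcongr
      calc _ ≤ cC * (5 * cC * (eC * g * R ^ 2)) :=
            mul_le_mul_of_nonneg_left (by linarith) (by linarith)
        _ = _ := by unfold BC; ring

lemma phi_large : ∃ A : ℝ, 0 < A ∧ ∀ (ξ : ℝ) (u u' : ℝ → ℝ), 1 / 4 ≤ ξ → Sol ξ (fun _ => 0) u u' →
    u 0 = 0 → u' 0 = 1 → ∀ R, 0 ≤ R → |u R| ≤ A / √ξ ∧ |u' R| ≤ A ∧ |u R| ≤ A * R := by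
  have he := eC_one
  have hc := cC_one
  refine ⟨9 * cC * eC, by positivity, ?_⟩
  intro ξ u u' hξ hs hu0 hu0'
  have hsq : 1 / 2 ≤ √ξ := Real.le_sqrt_of_sq_le (by norm_num; linarith)
  have hec : eC ≤ cC * eC := by nlinarith
  have h0 : ∀ R, 0 ≤ R → |u R| ≤ 9 * cC * eC / √ξ ∧ |u' R| ≤ 9 * cC * eC := by
    intro R hR
    rw [le_div_iff₀ (by linarith)]
    rcases le_total R 3 with h3 | h3
    · obtain ⟨a1, a2, a3⟩ := core1' (g := 0) (by linarith) le_rfl hs hu0 hR h3 (by simp)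
      rw [hu0', abs_one, zero_mul, add_zero, mul_one] at a1 a2 a3
      constructor <;> linarith
    · obtain ⟨a1, a2, a3⟩ := core1' (g := 0) (R := 3) (by linarith) le_rfl hs hu0 (by norm_num) le_rfl (by simp)
      rw [hu0', abs_one, zero_mul, add_zero, mul_one] at a1 a2 a3
      have hE3 := E3_bound (by linarith) a1 a2 a3
      have h4 := core2 (g := 0) (R := R) (by linarith) le_rfl hs h3 (by simp)
      have h5 : √((u' R - Q R * u R) ^ 2 + ξ * (u R) ^ 2) ≤ 3 * (cC * eC) := by
        refine h4.trans ?_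
        rw [zero_mul, add_zero]
        calc _ ≤ cC * (3 * eC) := mul_le_mul_of_nonneg_left hE3 (by linarith)
          _ = _ := by ring
      have h6 := (sqrt_mul_abs_le (u' R - Q R * u R) (u R) (by linarith)).trans h5
      have h7 : |u' R - Q R * u R| ≤ _ := (abs_le_sqrt_add_left _ (by positivity)).trans h5
      have h8 : |u R| ≤ 6 * (cC * eC) := by nlinarith [abs_nonneg (u R)]
      obtain ⟨q0, _, q1⟩ := Q_bd h3
      have h9 : |Q R * u R| ≤ 6 * (cC * eC) := by
        rw [abs_mul, abs_of_nonneg q0]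
        nlinarith [abs_nonneg (u R)]
      refine ⟨by linarith, ?_⟩
      have := abs_add_le (u' R - Q R * u R) (Q R * u R)
      rw [sub_add_cancel] at this
      linarith
  intro R hR
  exact ⟨(h0 R hR).1, (h0 R hR).2, mvt_bound hs.1 hu0 hR (fun s hs => (h0 s hs.1).2)⟩

lemma wronsk {ξ b : ℝ} {u u' : ℝ → ℝ} (hξ : 0 ≤ ξ) (hs : Sol ξ (fun _ => 0) u u')
    (hu0 : u 0 = 0) (hb : ∀ s ∈ Set.Icc (0:ℝ) 3, |u s| ≤ b) :
    |u' 3 - Q 3 * u 3| ≤ Real.exp 15 * (4 * b * ξ) := by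
  have hb0 : 0 ≤ b := (abs_nonneg _).trans (hb 0 (by norm_num))
  let N : ℝ → ℝ := fun R => u' R * (R ^ 5 - 9 * R) - u R * (15 * R ^ 2 - 9)
  have hN : ∀ x, HasDerivAt N (5 * x / (3 + x ^ 2) * N x - ξ * u x * (x ^ 5 - 9 * x)) x := by
    intro x
    have d1 := (hasDerivAt_pow 5 x).sub ((hasDerivAt_id x).const_mul 9)
    have d2 := ((hasDerivAt_pow 2 x).const_mul 15).sub_const 9
    have d3 := ((hs.2 x).mul d1).sub ((hs.1 x).mul d2)
    refine d3.congr_deriv ?_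
    have h6 : 1 + x ^ 2 / 3 = (3 + x ^ 2) / 3 := by ring
    have h7 : 3 + x ^ 2 ≠ 0 := by positivity
    simp only [V, N, h6, Pi.sub_apply, id]
    field_simp
    push_cast
    ring
  have key := energy_lemma (E := fun R => (N R) ^ 2)
    (E' := fun x => 2 * N x * (5 * x / (3 + x ^ 2) * N x - ξ * u x * (x ^ 5 - 9 * x)))
    (K := fun R => 5 * R) (k := fun _ => 5) (g := 270 * b * ξ) (by norm_num : (0:ℝ) ≤ 3)
    (by positivity) ?_ ?_ ?_ ?_ ?_ ?_
  · simp only [Real.sqrt_sq_eq_abs] at key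
    have hN0 : N 0 = 0 := by simp [N, hu0]
    have hN3 : N 3 = 216 * (u' 3 - Q 3 * u 3) := by
      simp only [N, Q_eq (le_refl (3:ℝ))]; ring
    rw [hN0, hN3, abs_mul] at key
    norm_num at key
    have := Real.exp_pos 15
    have h9 : 0 ≤ b * ξ := by positivity
    nlinarith [mul_nonneg this.le h9]
  · intro x _
    exact ((hN x).pow 2).congr_deriv (by simp)
  · intro x _
    exact ((hasDerivAt_id x).const_mul (5:ℝ)).congr_deriv (by simp)
  · intro x _; norm_num
  · intro x hx; have := hx.1; simp; linarith
  · intro x; positivity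
  · intro x hx
    have hx0 := hx.1
    have hx3 := hx.2
    rw [Real.sqrt_sq_eq_abs]
    have h1 : 5 * x / (3 + x ^ 2) ≤ 5 := by
      rw [div_le_iff₀ (by positivity)]; nlinarith [sq_nonneg (x - 1)]
    have h2 : |x ^ 5 - 9 * x| ≤ 270 := by
      have : x ^ 5 ≤ 3 ^ 5 := by gcongr
      have : 0 ≤ x ^ 5 := by positivity
      rw [abs_le]; constructor <;> linarith
    have h3 : |ξ * u x * (x ^ 5 - 9 * x)| ≤ 270 * b * ξ := by
      rw [abs_mul, abs_mul, abs_of_nonneg hξ]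
      calc _ ≤ ξ * b * 270 := by have := hb x hx; gcongr
        _ = _ := by ring
    have h4 : -(N x * (ξ * u x * (x ^ 5 - 9 * x))) ≤ 270 * b * ξ * |N x| := by
      calc _ ≤ |N x * (ξ * u x * (x ^ 5 - 9 * x))| := neg_le_abs _
        _ = |ξ * u x * (x ^ 5 - 9 * x)| * |N x| := by rw [abs_mul, mul_comm]
        _ ≤ _ := by gcongr
    nlinarith [mul_le_mul_of_nonneg_right h1 (sq_nonneg (N x))]

lemma phi_small : ∃ A : ℝ, 0 < A ∧ ∀ (ξ : ℝ) (u u' : ℝ → ℝ), 0 < ξ → ξ < 1 →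
    Sol ξ (fun _ => 0) u u' → u 0 = 0 → u' 0 = 1 → ∀ R, 0 ≤ R → |u R| ≤ A := by
  have he := eC_one
  have hc := cC_one
  have hx : 1 ≤ Real.exp 15 := Real.one_le_exp (by norm_num)
  refine ⟨5 * (cC * (Real.exp 15 * eC)), by positivity, ?_⟩
  intro ξ u u' hξ hξ1 hs hu0 hu0' R hR
  have hsq : 0 < √ξ := Real.sqrt_pos.mpr hξ
  have h1 : ∀ s ∈ Set.Icc (0:ℝ) 3, |u s| ≤ eC := by
    intro s hs'
    obtain ⟨a1, a2, a3⟩ := core1' (g := 0) hξ.le le_rfl hs hu0 hs'.1 hs'.2 (by simp)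
    rwa [hu0', abs_one, zero_mul, add_zero, mul_one] at a2
  have hxe : eC ≤ Real.exp 15 * eC := by nlinarith
  have hcx : Real.exp 15 * eC ≤ cC * (Real.exp 15 * eC) := by nlinarith
  rcases le_total R 3 with h3 | h3
  · have := h1 R ⟨hR, h3⟩
    linarith
  · have h4 := core2 (g := 0) (R := R) hξ.le le_rfl hs h3 (by simp)
    have hw := wronsk hξ.le hs hu0 h1
    have h5 := sqrt_le_add (u' 3 - Q 3 * u 3) (u 3) hξ.le
    have h6 := h1 3 (by norm_num)
    have hss : ξ ≤ √ξ := by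
      have := Real.sq_sqrt hξ.le
      have : √ξ ≤ 1 := Real.sqrt_le_one.mpr hξ1.le
      nlinarith
    have h7 : √((u' 3 - Q 3 * u 3) ^ 2 + ξ * (u 3) ^ 2) ≤ √ξ * (5 * (Real.exp 15 * eC)) := by
      have i1 : Real.exp 15 * eC * ξ ≤ Real.exp 15 * eC * √ξ := by gcongr
      have i2 : √ξ * |u 3| ≤ √ξ * (Real.exp 15 * eC) := by gcongr; linarith
      linarith
    have h8 := (sqrt_mul_abs_le (u' R - Q R * u R) (u R) hξ.le).trans h4
    rw [zero_mul, add_zero] at h8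
    have h9 := h8.trans (mul_le_mul_of_nonneg_left h7 (Real.exp_pos 2).le)
    refine le_of_mul_le_mul_left (h9.trans (le_of_eq ?_)) hsq
    simp only [cC]; ring

lemma deriv_abs_le {f : ℝ → ℝ} {J : Set ℝ} (hJ : IsOpen J) {ξ M : ℝ} (hξ : ξ ∈ J) (hM : 0 ≤ M)
    (h : ∀ ζ ∈ J, |f ζ - f ξ| ≤ M * |ζ - ξ|) : |deriv f ξ| ≤ M := by
  have := norm_deriv_le_of_lip' (f := f) (x₀ := ξ) (C := M) hM (by
    filter_upwards [hJ.mem_nhds hξ] with ζ hζ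
    simpa using h ζ hζ)
  simpa using this

lemma abstract_deriv {f : ℝ → ℝ} {J : Set ℝ} (hJ : IsOpen J) {M : ℝ} (hM : 0 ≤ M)
    (h2 : ∀ ξ ∈ J, ∀ ζ ∈ J, ∀ η ∈ J, ζ ≠ ξ → η ≠ ξ → ζ ≠ η →
      |slope f ξ ζ - slope f ξ η| ≤ M * |ζ - η|) {ξ : ℝ} (hξ : ξ ∈ J) :
    |deriv (deriv f) ξ| ≤ 2 * M := by
  have hd : ∀ ξ ∈ J, DifferentiableAt ℝ f ξ := by
    intro ξ hξ
    have hl : LipschitzOnWith M.toNNReal (slope f ξ) (J \ {ξ}) := by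
      apply LipschitzOnWith.of_dist_le_mul
      intro ζ hζ η hη
      rw [Real.coe_toNNReal _ hM, Real.dist_eq, Real.dist_eq]
      by_cases he : ζ = η
      · simp [he]
      · exact h2 ξ hξ ζ hζ.1 η hη.1 hζ.2 hη.2 he
    obtain ⟨g, hg, hgf⟩ := hl.extend_real
    have : HasDerivAt f (g ξ) ξ := by
      rw [hasDerivAt_iff_tendsto_slope]
      have hc : Filter.Tendsto g (nhdsWithin ξ {ξ}ᶜ) (nhds (g ξ)) :=
        hg.continuous.continuousAt.tendsto.mono_left nhdsWithin_le_nhds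
      refine hc.congr' ?_
      filter_upwards [self_mem_nhdsWithin, nhdsWithin_le_nhds (hJ.mem_nhds hξ)] with ζ h1 h2
      exact (hgf ⟨h2, h1⟩).symm
    exact this.differentiableAt
  have h3 : ∀ ξ ∈ J, ∀ ζ ∈ J, ζ ≠ ξ → |slope f ξ ζ - deriv f ξ| ≤ M * |ζ - ξ| := by
    intro ξ hξ ζ hζ hne
    have ht := hasDerivAt_iff_tendsto_slope.mp (hd ξ hξ).hasDerivAt
    have hl : Filter.Tendsto (fun η => |slope f ξ ζ - slope f ξ η|) (nhdsWithin ξ {ξ}ᶜ)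
      (nhds |slope f ξ ζ - deriv f ξ|) := (tendsto_const_nhds.sub ht).abs
    have hr : Filter.Tendsto (fun η => M * |ζ - η|) (nhdsWithin ξ {ξ}ᶜ) (nhds (M * |ζ - ξ|)) := by
      have : Continuous (fun η => M * |ζ - η|) := by fun_prop
      exact this.continuousAt.tendsto.mono_left nhdsWithin_le_nhds
    refine le_of_tendsto_of_tendsto hl hr ?_
    filter_upwards [self_mem_nhdsWithin, nhdsWithin_le_nhds (hJ.mem_nhds hξ)] with η h1 h3
    by_cases he : ζ = η
    · simp [he]
    · exact h2 ξ hξ ζ hζ η h3 hne h1 he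
  apply deriv_abs_le hJ hξ (by positivity)
  intro ζ hζ
  by_cases hne : ζ = ξ
  · simp [hne]
  have a1 := h3 ξ hξ ζ hζ hne
  have a2 := h3 ζ hζ ξ hξ (Ne.symm hne)
  rw [slope_comm, abs_sub_comm ξ ζ] at a2
  rw [abs_le] at *
  constructor <;> linarith

lemma final_lemma {φ : ℝ → ℝ → ℝ} {φ' : ℝ → ℝ → ℝ} (hs : ∀ ξ, Sol ξ (fun _ => 0) (φ ξ) (φ' ξ))
    (h0 : ∀ ξ, φ ξ 0 = 0) (h0' : ∀ ξ, φ' ξ 0 = 1) {J : Set ℝ} (hJ : IsOpen J) {a g R : ℝ}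
    (ha : 0 < a) (hJa : ∀ ζ ∈ J, a ≤ ζ) (hg : 0 ≤ g) (hR : 0 ≤ R)
    (hb : ∀ ζ ∈ J, ∀ s ∈ Set.Icc 0 R, |φ ζ s| ≤ g) {ξ : ℝ} (hξ : ξ ∈ J) :
    (|deriv (fun ζ => φ ζ R) ξ| ≤ BC * g * (R / √a) ∧ |deriv (fun ζ => φ ζ R) ξ| ≤ BC * g * R ^ 2) ∧
    (|deriv (deriv (fun ζ => φ ζ R)) ξ| ≤ 2 * (BC ^ 2 * g * (R ^ 2 / a)) ∧
      |deriv (deriv (fun ζ => φ ζ R)) ξ| ≤ 2 * (BC ^ 2 * g * R ^ 4)) := by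
  have hBC : 0 ≤ BC := by unfold BC cC eC; positivity
  have hsa : 0 < √a := Real.sqrt_pos.mpr ha
  -- slopes
  have hsol : ∀ η ζ, ζ ≠ η → Sol η (φ ζ) (fun s => (φ ζ s - φ η s) / (ζ - η))
      (fun s => (φ' ζ s - φ' η s) / (ζ - η)) := by
    intro η ζ hne
    have hz : ζ - η ≠ 0 := sub_ne_zero.mpr hne
    refine ⟨fun x => (((hs ζ).1 x).sub ((hs η).1 x)).div_const _, fun x => ?_⟩
    refine ((((hs ζ).2 x).sub ((hs η).2 x)).div_const (ζ - η)).congr_deriv ?_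
    field_simp
    ring
  have hsl : ∀ η ∈ J, ∀ ζ ∈ J, ζ ≠ η → ∀ s ∈ Set.Icc 0 R,
      |(φ ζ s - φ η s) / (ζ - η)| ≤ BC * g * (R / √a) ∧
      |(φ ζ s - φ η s) / (ζ - η)| ≤ BC * g * R ^ 2 := by
    intro η hη ζ hζ hne s hs'
    obtain ⟨a1, a2⟩ := source (R := s) (ha.trans_le (hJa η hη)) hg (hsol η ζ hne) (by simp [h0]) (by simp [h0'])
      hs'.1 (fun t ht => hb ζ hζ t ⟨ht.1, ht.2.trans hs'.2⟩)
    have := hs'.1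
    have := hs'.2
    have := hJa η hη
    refine ⟨a1.trans ?_, a2.trans ?_⟩ <;> gcongr
  have hsol2 : ∀ ξ ζ η, ζ ≠ ξ → η ≠ ξ → ζ ≠ η →
      Sol ξ (fun s => (φ ζ s - φ η s) / (ζ - η))
      (fun s => ((φ ζ s - φ ξ s) / (ζ - ξ) - (φ η s - φ ξ s) / (η - ξ)) / (ζ - η))
      (fun s => ((φ' ζ s - φ' ξ s) / (ζ - ξ) - (φ' η s - φ' ξ s) / (η - ξ)) / (ζ - η)) := by
    intro ξ ζ η h1 h2 h3
    have hz : ζ - η ≠ 0 := sub_ne_zero.mpr h3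
    refine ⟨fun x => (((hsol ξ ζ h1).1 x).sub ((hsol ξ η h2).1 x)).div_const _, fun x => ?_⟩
    refine ((((hsol ξ ζ h1).2 x).sub ((hsol ξ η h2).2 x)).div_const (ζ - η)).congr_deriv ?_
    ring
  have hslR : ∀ M, (∀ η ∈ J, ∀ ζ ∈ J, ζ ≠ η → |(φ ζ R - φ η R) / (ζ - η)| ≤ M) →
      |deriv (fun ζ => φ ζ R) ξ| ≤ M ∨ M < 0 := by
    intro M h
    rcases lt_or_ge M 0 with hM | hM
    · exact Or.inr hM
    left
    apply deriv_abs_le hJ hξ hM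
    intro ζ hζ
    by_cases hne : ζ = ξ
    · simp [hne]
    have := h ξ hξ ζ hζ hne
    rwa [abs_div, div_le_iff₀ (abs_pos.mpr (sub_ne_zero.mpr hne))] at this
  have hsl2 : ∀ M, 0 ≤ M → (∀ ξ ∈ J, ∀ ζ ∈ J, ∀ η ∈ J, ζ ≠ ξ → η ≠ ξ → ζ ≠ η →
      |((φ ζ R - φ ξ R) / (ζ - ξ) - (φ η R - φ ξ R) / (η - ξ)) / (ζ - η)| ≤ M) →
      |deriv (deriv (fun ζ => φ ζ R)) ξ| ≤ 2 * M := by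
    intro M hM h
    refine abstract_deriv hJ hM ?_ hξ
    intro ξ hξ ζ hζ η hη h1 h2 h3
    have := h ξ hξ ζ hζ η hη h1 h2 h3
    rw [abs_div, div_le_iff₀ (abs_pos.mpr (sub_ne_zero.mpr h3))] at this
    simpa only [slope_def_field] using this
  have hRR : R ∈ Set.Icc 0 R := ⟨hR, le_rfl⟩
  have n1 : 0 ≤ BC * g * (R / √a) := by positivity
  have n2 : 0 ≤ BC * g * R ^ 2 := by positivity
  refine ⟨⟨?_, ?_⟩, ?_, ?_⟩
  · exact (hslR _ (fun η hη ζ hζ hne => (hsl η hη ζ hζ hne R hRR).1)).resolve_right (not_lt.mpr n1)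
  · exact (hslR _ (fun η hη ζ hζ hne => (hsl η hη ζ hζ hne R hRR).2)).resolve_right (not_lt.mpr n2)
  · apply hsl2 _ (by positivity)
    intro ξ hξ ζ hζ η hη h1 h2 h3
    have := (source (ha.trans_le (hJa ξ hξ)) n1 (hsol2 ξ ζ η h1 h2 h3) (by simp [h0]) (by simp [h0'])
      hR (fun s hs' => (hsl η hη ζ hζ h3 s hs').1)).1
    refine this.trans ?_
    have hle := hJa ξ hξ
    calc _ ≤ BC * (BC * g * (R / √a)) * (R / √a) := by gcongr
      _ = BC ^ 2 * g * (R ^ 2 / (√a) ^ 2) := by ring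
      _ = _ := by rw [Real.sq_sqrt ha.le]
  · apply hsl2 _ (by positivity)
    intro ξ hξ ζ hζ η hη h1 h2 h3
    have := (source (ha.trans_le (hJa ξ hξ)) n2 (hsol2 ξ ζ η h1 h2 h3) (by simp [h0]) (by simp [h0'])
      hR (fun s hs' => (hsl η hη ζ hζ h3 s hs').2)).2
    refine this.trans (le_of_eq ?_)
    ring

/-- Pointwise bounds on the regular solution `φ(R,ξ)` of `𝓛φ = ξφ`, `φ(0,ξ)=0`,
`∂_Rφ(0,ξ)=1`, and on its first and second `ξ`-derivatives. -/
theorem generalized_eigenfunction_bounds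
    (φ : ℝ → ℝ → ℝ)
    (hφ : ∀ ξ : ℝ,
      φ ξ 0 = 0 ∧ deriv (φ ξ) 0 = 1 ∧
      (∀ R : ℝ, HasDerivAt (φ ξ) (deriv (φ ξ) R) R) ∧
      (∀ R : ℝ, HasDerivAt (deriv (φ ξ)) (deriv (deriv (φ ξ)) R) R) ∧
      (∀ R : ℝ, - deriv (deriv (φ ξ)) R - (5 / (1 + R ^ 2 / 3) ^ 2) * φ ξ R = ξ * φ ξ R)) :
    ∃ C : ℝ, 0 < C ∧
      (∀ ξ : ℝ, 1 < ξ → ∀ R : ℝ, 0 < R →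
        |φ ξ R| ≤ C / Real.sqrt ξ ∧
        |R * deriv (φ ξ) R| ≤ C * R ∧
        |deriv (fun ζ => φ ζ R) ξ| ≤ C * min (R / ξ) (R ^ 3) ∧
        |deriv (fun ζ => deriv (fun ζ' => φ ζ' R) ζ) ξ|
          ≤ C * min (R ^ 2 / (ξ * Real.sqrt ξ)) (R ^ 5)) ∧
      (∀ ξ : ℝ, 0 < ξ → ξ < 1 → ∀ R : ℝ, 0 < R →
        |deriv (fun ζ => φ ζ R) ξ| ≤ C * min (R / Real.sqrt ξ) (R ^ 2) ∧
        |deriv (fun ζ => deriv (fun ζ' => φ ζ' R) ζ) ξ| ≤ C * min (R ^ 2 / ξ) (R ^ 4)) := by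
  obtain ⟨A, hA, hlarge⟩ := phi_large
  obtain ⟨A', hA', hsmall⟩ := phi_small
  have hs : ∀ ξ, Sol ξ (fun _ => 0) (φ ξ) (deriv (φ ξ)) := by
    intro ξ
    obtain ⟨_, _, h1, h2, h3⟩ := hφ ξ
    refine ⟨h1, fun R => (h2 R).congr_deriv ?_⟩
    have := h3 R
    unfold V
    linarith
  have h0 : ∀ ξ, φ ξ 0 = 0 := fun ξ => (hφ ξ).1
  have h0' : ∀ ξ, deriv (φ ξ) 0 = 1 := fun ξ => (hφ ξ).2.1
  have hBC : 0 < BC := by unfold BC cC eC; positivity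
  set B := BC with hB
  have hsq4 : ∀ ξ : ℝ, 0 ≤ ξ → √(ξ / 4) = √ξ / 2 := by
    intro ξ hξ
    rw [Real.sqrt_div hξ]
    congr 1
    rw [show (4:ℝ) = 2 ^ 2 by norm_num]
    exact Real.sqrt_sq (by norm_num)
  set C := A + 4 * B * A + 16 * B ^ 2 * A + 2 * B * A' + 8 * B ^ 2 * A' with hC
  have p1 : 0 < B * A := by positivity
  have p2 : 0 < B ^ 2 * A := by positivity
  have p3 : 0 < B * A' := by positivity
  have p4 : 0 < B ^ 2 * A' := by positivity
  refine ⟨C, by positivity, ?_, ?_⟩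
  · intro ξ hξ R hR
    have hξ0 : 0 < ξ := by linarith
    have hsq : 0 < √ξ := Real.sqrt_pos.mpr hξ0
    have hss : √ξ * √ξ = ξ := Real.mul_self_sqrt hξ0.le
    obtain ⟨a1, a2, _⟩ := hlarge ξ _ _ (by linarith) (hs ξ) (h0 ξ) (h0' ξ) R hR.le
    have hmem : ξ ∈ Set.Ioi (ξ / 4) := by simp; linarith
    have hJa : ∀ ζ ∈ Set.Ioi (ξ / 4), ξ / 4 ≤ ζ := fun ζ hζ => le_of_lt hζ
    have hL := fun ζ (hζ : ζ ∈ Set.Ioi (ξ / 4)) => hlarge ζ _ _ (by have := hJa ζ hζ; linarith)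
      (hs ζ) (h0 ζ) (h0' ζ)
    obtain ⟨⟨b1, _⟩, c1, _⟩ := final_lemma (g := A / √(ξ / 4)) (a := ξ / 4) hs h0 h0' isOpen_Ioi (by positivity)
      hJa (by positivity) hR.le (fun ζ hζ s hs' => ((hL ζ hζ s hs'.1).1).trans (by
        have := hJa ζ hζ
        have : 0 < √(ξ / 4) := Real.sqrt_pos.mpr (by positivity)
        gcongr)) hmem
    obtain ⟨⟨_, b2⟩, _, c2⟩ := final_lemma (g := A * R) (a := ξ / 4) hs h0 h0' isOpen_Ioi (by positivity)
      hJa (by positivity) hR.le (fun ζ hζ s hs' => ((hL ζ hζ s hs'.1).2.2).trans (by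
        have := hs'.2
        gcongr)) hmem
    rw [hsq4 ξ hξ0.le] at b1 c1
    refine ⟨?_, ?_, ?_, ?_⟩
    · refine a1.trans ?_
      gcongr; linarith
    · rw [abs_mul, abs_of_pos hR, mul_comm]
      gcongr; linarith
    · rw [mul_min_of_nonneg _ _ (by positivity)]
      refine le_min ?_ ?_
      · calc _ ≤ _ := b1
          _ = 4 * B * A * (R / (√ξ * √ξ)) := by field_simp; ring
          _ = 4 * B * A * (R / ξ) := by rw [hss]
          _ ≤ _ := by gcongr; linarith
      · calc _ ≤ _ := b2
          _ = B * A * R ^ 3 := by ring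
          _ ≤ _ := by gcongr; linarith
    · rw [mul_min_of_nonneg _ _ (by positivity)]
      refine le_min ?_ ?_
      · calc _ ≤ _ := c1
          _ = 16 * B ^ 2 * A * (R ^ 2 / (ξ * √ξ)) := by field_simp; ring
          _ ≤ _ := by gcongr; linarith
      · calc _ ≤ _ := c2
          _ = 2 * B ^ 2 * A * R ^ 5 := by ring
          _ ≤ _ := by gcongr; linarith
  · intro ξ hξ0 hξ1 R hR
    have hsq : 0 < √ξ := Real.sqrt_pos.mpr hξ0
    have hmem : ξ ∈ Set.Ioo (ξ / 4) 1 := ⟨by linarith, hξ1⟩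
    have hJa : ∀ ζ ∈ Set.Ioo (ξ / 4) 1, ξ / 4 ≤ ζ := fun ζ hζ => le_of_lt hζ.1
    obtain ⟨⟨b1, b2⟩, c1, c2⟩ := final_lemma (g := A') (a := ξ / 4) hs h0 h0' isOpen_Ioo (by positivity)
      hJa hA'.le hR.le (fun ζ hζ s hs' => hsmall ζ _ _ (by have := hJa ζ hζ; linarith) hζ.2
        (hs ζ) (h0 ζ) (h0' ζ) s hs'.1) hmem
    rw [hsq4 ξ hξ0.le] at b1
    constructor
    · rw [mul_min_of_nonneg _ _ (by positivity)]
      refine le_min ?_ ?_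
      · calc _ ≤ _ := b1
          _ = 2 * B * A' * (R / √ξ) := by rw [← hB]; field_simp
          _ ≤ _ := by gcongr; linarith
      · calc _ ≤ _ := b2
          _ ≤ _ := by gcongr; linarith
    · rw [mul_min_of_nonneg _ _ (by positivity)]
      refine le_min ?_ ?_
      · calc _ ≤ _ := c1
          _ = 8 * B ^ 2 * A' * (R ^ 2 / ξ) := by field_simp; ring
          _ ≤ _ := by gcongr; linarith
      · calc _ ≤ _ := c2
          _ = 2 * B ^ 2 * A' * R ^ 4 := by ring
          _ ≤ _ := by gcongr; linarith

end EigenfunctionBounds
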